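/- Let n ≥ 3 be an integer and suppose that per((J_n − I − P)[1|r]) takes the same value for all r with 3 ≤ r ≤ n. Then (n−2) · Σ_{k=0}^{n−3} (−1)^k · C(2n−k−4, k) · (n−k−2)! · (n−k−2) = per(J_n − I − P). -/

import Mathlib

open Finset

/-- The `m × m` all-ones matrix `J_m` (integer entries). -/
def Jmat (m : ℕ) : Matrix (Fin m) (Fin m) ℤ := Matrix.of fun _ _ => 1

/-- The `m × m` permutation matrix `P` of the cycle `(1,2,...,m)`: entry `1` exactly at the
positions `(i, i+1 mod m)`, and `0` elsewhere. -/
def Pmat (m : ℕ) : Matrix (Fin m) (Fin m) ℤ :=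
  Matrix.of fun i j => if j.1 = (i.1 + 1) % m then 1 else 0

/-- The order-preserving embedding of `Fin (m-1)` into `Fin m` that skips index `a`. -/
def skipIdx {m : ℕ} (a : ℕ) (i : Fin (m - 1)) : Fin m :=
  if i.1 < a then ⟨i.1, by have := i.isLt; omega⟩ else ⟨i.1 + 1, by have := i.isLt; omega⟩

/-- The matrix obtained from the `m × m` matrix `M` by deleting row `a` and column `b`
(`0`-based indices; the paper's `M[1|r]`, deleting row `1` and column `r` in `1`-based
indexing, is `delRC M 0 (r-1)`). -/
def delRC {m : ℕ} (M : Matrix (Fin m) (Fin m) ℤ) (a b : ℕ) :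
    Matrix (Fin (m - 1)) (Fin (m - 1)) ℤ :=
  Matrix.of fun i j => M (skipIdx a i) (skipIdx b j)

/-- `rookNum M j` is the number of ways to place `j` non-attacking rooks on the `1`-entries
of the matrix `M`: the number of `j`-element sets of positions carrying entry `1`, no two of
which share a row or a column.  In particular `rookNum M 0 = 1`. -/
def rookNum {α β : Type*} [Fintype α] [Fintype β] [DecidableEq α] [DecidableEq β]
    (M : Matrix α β ℤ) (j : ℕ) : ℕ :=
  ((Finset.powersetCard j (Finset.univ : Finset (α × β))).filter fun S =>
    ∀ p ∈ S, M p.1 p.2 = 1 ∧ ∀ q ∈ S, p ≠ q → p.1 ≠ q.1 ∧ p.2 ≠ q.2).card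

/-- The binomial coefficient `C(a,b)` for integer arguments, with the convention that it
vanishes unless `0 ≤ b ≤ a`. -/
def intChoose (a b : ℤ) : ℤ :=
  if 0 ≤ b ∧ b ≤ a then (a.toNat.choose b.toNat : ℤ) else 0

theorem perm_col_zero {m : ℕ} (A : Matrix (Fin (m+1)) (Fin (m+1)) ℤ) :
    A.permanent = ∑ i : Fin (m+1), A i 0 * (A.submatrix i.succAbove Fin.succ).permanent := by
  rw [Matrix.permanent, Finset.univ_perm_fin_succ, ← Finset.univ_product_univ]
  simp only [Finset.sum_map, Equiv.toEmbedding_apply, Finset.sum_product]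
  refine Finset.sum_congr rfl fun i _ => ?_
  simp only [Fin.prod_univ_succ, Equiv.Perm.decomposeFin_symm_apply_zero,
    Equiv.Perm.decomposeFin_symm_apply_succ, ← Finset.mul_sum]
  congr 1
  induction i using Fin.cases with
  | zero => simp [Matrix.permanent]
  | succ k =>
    rw [← Matrix.permanent_permute_cols (Fin.cycleRange k), Matrix.permanent]
    simp [Fin.succAbove_cycleRange]

theorem perm_row_zero {m : ℕ} (A : Matrix (Fin (m+1)) (Fin (m+1)) ℤ) :
    A.permanent = ∑ j : Fin (m+1), A 0 j * (A.submatrix Fin.succ j.succAbove).permanent := by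
  rw [← Matrix.permanent_transpose, perm_col_zero]
  refine Finset.sum_congr rfl fun j _ => ?_
  rw [← Matrix.permanent_transpose (A.submatrix _ _)]
  rfl

theorem perm_row {m : ℕ} (A : Matrix (Fin (m+1)) (Fin (m+1)) ℤ) (a : Fin (m+1)) :
    A.permanent = ∑ j : Fin (m+1), A a j * (A.submatrix a.succAbove j.succAbove).permanent := by
  rw [← Matrix.permanent_permute_cols (Fin.cycleRange a).symm, perm_row_zero]
  refine Finset.sum_congr rfl fun j _ => ?_
  simp only [Matrix.submatrix_apply, Fin.cycleRange_symm_zero, id, Matrix.submatrix_submatrix]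
  congr 2
  ext x y
  simp [Fin.cycleRange_symm_succ]

theorem perm_cell {m : ℕ} (A B : Matrix (Fin (m+1)) (Fin (m+1)) ℤ) (a b : Fin (m+1))
    (hA : A a b = 0) (hB : B a b = 1)
    (hAB : ∀ i j, ¬ (i = a ∧ j = b) → A i j = B i j) :
    A.permanent = B.permanent - (A.submatrix a.succAbove b.succAbove).permanent := by
  rw [perm_row A a, perm_row B a, ← Finset.add_sum_erase _ _ (Finset.mem_univ b),
    ← Finset.add_sum_erase _ (fun j => B a j * _) (Finset.mem_univ b)]
  have h1 : ∀ j : Fin (m+1), B.submatrix a.succAbove j.succAbove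
      = A.submatrix a.succAbove j.succAbove := by
    intro j
    ext x y
    exact (hAB _ _ (fun h => Fin.succAbove_ne a x h.1)).symm
  have h2 : ∑ j ∈ Finset.univ.erase b, B a j * (B.submatrix a.succAbove j.succAbove).permanent
      = ∑ j ∈ Finset.univ.erase b, A a j * (A.submatrix a.succAbove j.succAbove).permanent := by
    refine Finset.sum_congr rfl fun j hj => ?_
    rw [h1, hAB a j (fun h => (Finset.ne_of_mem_erase hj) h.2)]
  rw [h2, hA, hB, h1]
  ring

/-- all-ones matrix with the first `L` cells of the staircase path replaced by zero -/
def pathM (m L : ℕ) : Matrix (Fin m) (Fin m) ℤ :=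
  Matrix.of fun i j => if (j.1 = i.1 ∨ j.1 = i.1 + 1) ∧ i.1 + j.1 < L then 0 else 1

theorem succAbove_val_eq {m : ℕ} (a : Fin (m+1)) (i : Fin m) :
    (a.succAbove i).1 = if i.1 < a.1 then i.1 else i.1 + 1 := by
  simp only [Fin.succAbove, Fin.lt_def, Fin.val_castSucc]
  split_ifs <;> simp

theorem pathM_rec (m L : ℕ) (h : L ≤ 2 * m) :
    (pathM (m+1) (L+1)).permanent = (pathM (m+1) L).permanent - (pathM m (L-1)).permanent := by
  have key := perm_cell (pathM (m+1) (L+1)) (pathM (m+1) L) ⟨L/2, by omega⟩ ⟨(L+1)/2, by omega⟩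
    (by simp only [pathM, Matrix.of_apply]; rw [if_pos]; omega)
    (by simp only [pathM, Matrix.of_apply]; rw [if_neg]; omega)
    (by
      intro i j hij
      simp only [pathM, Matrix.of_apply]
      simp only [Fin.ext_iff] at hij
      congr 1
      apply propext
      omega)
  rw [key]
  congr 2
  ext i j
  simp only [pathM, Matrix.of_apply, Matrix.submatrix_apply, succAbove_val_eq]
  congr 1
  apply propext
  split_ifs <;> omega

theorem pathM_zero (m : ℕ) : (pathM m 0).permanent = (m.factorial : ℤ) := by
  simp [pathM, Matrix.permanent, Fintype.card_perm]

theorem pathM_formula (L : ℕ) : ∀ m : ℕ, L ≤ 2 * m - 1 → (pathM m L).permanent =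
    ∑ k ∈ Finset.range (m+1), (-1 : ℤ)^k * ((L+1-k).choose k : ℤ) * ((m-k).factorial : ℤ) := by
  induction L using Nat.strong_induction_on with
  | _ L ih =>
  intro m hm
  rcases L with _ | L
  · rw [pathM_zero, Finset.sum_eq_single 0]
    · simp
    · intro k _ hk
      rw [Nat.choose_eq_zero_of_lt (by omega)]
      simp
    · simp
  · rcases m with _ | m
    · omega
    rw [pathM_rec m L (by omega), ih L (by omega) (m+1) (by omega),
      ih (L-1) (by omega) m (by omega)]
    rw [Finset.sum_range_succ', Finset.sum_range_succ' _ (m+1)]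
    have : ∀ k ∈ Finset.range (m+1),
        (-1 : ℤ)^(k+1) * ((L+1+1-(k+1)).choose (k+1) : ℤ) * ((m+1-(k+1)).factorial : ℤ)
        = (-1 : ℤ)^(k+1) * ((L+1-(k+1)).choose (k+1) : ℤ) * ((m+1-(k+1)).factorial : ℤ)
          - (-1 : ℤ)^k * ((L-1+1-k).choose k : ℤ) * ((m-k).factorial : ℤ) := by
      intro k _
      have e : (L+1+1-(k+1)).choose (k+1) = (L+1-(k+1)).choose (k+1) + (L-1+1-k).choose k := by
        rcases Nat.lt_or_ge L k with hk | hk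
        · rw [Nat.choose_eq_zero_of_lt (by omega), Nat.choose_eq_zero_of_lt (by omega),
            Nat.choose_eq_zero_of_lt (by omega)]
        · rw [show L+1+1-(k+1) = (L-k)+1 by omega, show L+1-(k+1) = L-k by omega,
            Nat.choose_succ_succ, add_comm]
          congr 1
          rcases Nat.eq_zero_or_pos L with h0 | h0
          · have : k = 0 := by omega
            subst this; simp
          · congr 1; omega
      rw [e, show m+1-(k+1) = m-k by omega]
      push_cast
      ring
    rw [Finset.sum_congr rfl this, Finset.sum_sub_distrib]
    simp
    ring

theorem A_apply (m : ℕ) (i j : Fin m) (hm : 2 ≤ m) : (Jmat m - 1 - Pmat m) i j =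
    if i.1 = j.1 ∨ j.1 = i.1 + 1 ∨ (i.1 + 1 = m ∧ j.1 = 0) then 0 else 1 := by
  have hi := i.isLt
  have hj := j.isLt
  simp only [Jmat, Pmat, Matrix.sub_apply, Matrix.of_apply, Matrix.one_apply, Fin.ext_iff]
  rcases Nat.lt_or_ge (i.1+1) m with h | h
  · rw [Nat.mod_eq_of_lt h]
    split_ifs <;> omega
  · have : i.1 + 1 = m := by omega
    rw [this, Nat.mod_self]
    split_ifs <;> omega

theorem skip_val {m : ℕ} (a : ℕ) (i : Fin (m - 1)) :
    (skipIdx a i : Fin m).1 = if i.1 < a then i.1 else i.1 + 1 := by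
  unfold skipIdx
  split_ifs <;> rfl

theorem minor_perm (m : ℕ) :
    (delRC (Jmat (m+3) - 1 - Pmat (m+3)) 0 (m+2)).permanent =
      (pathM (m+2) (2*m+1)).permanent - (pathM (m+1) (2*m+1)).permanent := by
  have key := perm_cell (m := m+1) (delRC (Jmat (m+3) - 1 - Pmat (m+3)) 0 (m+2))
    ((pathM (m+2) (2*m+1)).submatrix id (finRotate (m+2)).symm) (Fin.last _) 0
    (by
      simp only [delRC, Matrix.of_apply]
      rw [A_apply _ _ _ (by omega), if_pos]
      simp [skip_val])
    (by
      have : (finRotate (m+2)).symm 0 = Fin.last (m+1) := by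
        rw [Equiv.symm_apply_eq]; simp
      simp only [pathM, Matrix.submatrix_apply, this, Matrix.of_apply, id]
      rw [if_neg]
      simp only [Fin.val_last]
      omega)
    (by
      intro i j hij
      have hi : i.1 < m + 2 := i.isLt
      have hj : j.1 < m + 2 := j.isLt
      obtain ⟨y, rfl⟩ := (finRotate (m+2)).surjective j
      have hy : y.1 < m + 2 := y.isLt
      simp only [delRC, Matrix.of_apply, Matrix.submatrix_apply, Equiv.symm_apply_apply, pathM, id]
      rw [A_apply _ _ _ (by omega)]
      simp only [skip_val]
      have hv : ((finRotate (m+2)) y).1 = if y = Fin.last (m+1) then 0 else y.1 + 1 :=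
        coe_finRotate y
      simp only [Fin.ext_iff, Fin.val_last, Fin.val_zero] at hij hv
      congr 1
      apply propext
      split_ifs at hv ⊢ <;> omega)
  refine key.trans ?_
  rw [Matrix.permanent_permute_rows]
  congr 2
  ext i j
  have hi := i.isLt
  have hj := j.isLt
  simp only [delRC, Matrix.of_apply, Matrix.submatrix_apply, pathM]
  rw [A_apply _ _ _ (by omega)]
  simp only [skip_val, succAbove_val_eq, Fin.val_last, Fin.val_zero, Nat.not_lt_zero, if_false]
  congr 1
  apply propext
  split_ifs <;> omega

theorem minor_formula (m : ℕ) :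
    (delRC (Jmat (m+3) - 1 - Pmat (m+3)) 0 (m+2)).permanent =
      ∑ k ∈ Finset.range (m+1), (-1 : ℤ)^k * ((2*m+2-k).choose k : ℤ) *
        ((m+1-k).factorial : ℤ) * ((m+1-k : ℕ) : ℤ) := by
  rw [minor_perm, pathM_formula _ _ (by omega), pathM_formula _ _ (by omega),
    Finset.sum_range_succ, Nat.choose_eq_zero_of_lt (by omega : 2*m+1+1-(m+1+1) < m+1+1)]
  simp only [Nat.cast_zero, mul_zero, zero_mul, add_zero]
  rw [← Finset.sum_sub_distrib, Finset.sum_range_succ]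
  simp only [Nat.sub_self, Nat.factorial]
  rw [show m+2-(m+1) = 1 by omega]
  simp only [Nat.factorial_one, sub_self, add_zero, Nat.cast_one]
  refine Finset.sum_congr rfl fun k hk => ?_
  rw [Finset.mem_range] at hk
  rw [show m+2-k = (m+1-k)+1 by omega, Nat.factorial_succ]
  push_cast
  ring

/-- **Necessary condition (Lemma 6).**  If `per((J_n - I - P)[1|r])` takes the same value
for all `3 ≤ r ≤ n`, then
`(n-2) · ∑_{k=0}^{n-3} (-1)^k · C(2n-k-4, k) · (n-k-2)! · (n-k-2) = per(J_n - I - P)`. -/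
theorem necessary_condition (n : ℕ) (hn : 3 ≤ n)
    (h : ∀ r s : ℕ, 3 ≤ r → r ≤ n → 3 ≤ s → s ≤ n →
      (delRC (Jmat n - 1 - Pmat n) 0 (r - 1)).permanent =
        (delRC (Jmat n - 1 - Pmat n) 0 (s - 1)).permanent) :
    ((n : ℤ) - 2) *
        ∑ k ∈ Finset.range (n - 2),
          (-1 : ℤ) ^ k * (Nat.choose (2 * n - k - 4) k : ℤ) *
            (Nat.factorial (n - k - 2) : ℤ) * ((n - k - 2 : ℕ) : ℤ) =
      (Jmat n - 1 - Pmat n).permanent := by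
  obtain ⟨m, rfl⟩ : ∃ m, n = m + 3 := ⟨n - 3, by omega⟩
  have hS := minor_formula m
  rw [show m + 3 - 2 = m + 1 by omega]
  have e : ∀ k, 2 * (m+3) - k - 4 = 2*m+2-k := fun k => by omega
  have e2 : ∀ k, m + 3 - k - 2 = m+1-k := fun k => by omega
  simp only [e, e2]
  rw [← hS, perm_row_zero (m := m+2), Fin.sum_univ_succ, Fin.sum_univ_succ,
    A_apply _ _ _ (by omega), A_apply _ _ _ (by omega), if_pos (by simp), if_pos (by simp),
    zero_mul, zero_mul, zero_add, zero_add]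
  have : ∀ j : Fin (m+1), (Jmat (m+3) - 1 - Pmat (m+3)) 0 j.succ.succ *
      ((Jmat (m+3) - 1 - Pmat (m+3)).submatrix Fin.succ j.succ.succ.succAbove).permanent =
      (delRC (Jmat (m+3) - 1 - Pmat (m+3)) 0 (m+2)).permanent := by
    intro j
    rw [A_apply _ _ _ (by omega), if_neg (by simp), one_mul]
    have hj := j.isLt
    have h1 := h (j.1+3) (m+3) (by omega) (by omega) (by omega) (by omega)
    refine Eq.trans ?_ h1
    congr 1
  rw [Finset.sum_congr rfl (fun j _ => this j)]
  simp only [Finset.sum_const, Finset.card_univ, Fintype.card_fin, nsmul_eq_mul]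
  push_cast
  ring
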